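/- Let g_1,…,g_m ∈ ℝ[x_1,…,x_n], V = {x ∈ ℝ^n : g_j(x) = 0 for j = 1,…,m}, and suppose f ∈ ℝ[x_1,…,x_n] has a global minimizer x* ∈ V on V with f(x*) = f*. Fix ε > 0. Then for all sufficiently large r (with 2r ≥ max(deg f, deg g_j^2)): f* ≤ sup𝒬*_{εr} ≤ inf𝒬_{εr} ≤ f* + ε·θ_r(x*) ≤ f* + ε·∑_{i=1}^n e^{(x*_i)²}, where inf𝒬_{εr} is the infimum of L_y(f + ε·θ_r) over all y : {α ∈ ℕ^n : |α| ≤ 2r} → ℝ with y_0 = 1, M_r(y) positive semidefinite, and L_y(g_j^2) ≤ 0 for all j, and sup𝒬*_{εr} is the supremum of γ over all γ ∈ ℝ, λ ∈ ℝ_+^m, and s.o.s. polynomials q of degree ≤ 2r satisfying f + ε·θ_r − γ = q − ∑_{j=1}^m λ_j·g_j^2. -/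

import Mathlib

open MvPolynomial MeasureTheory Filter Topology

/-- `θ_r(x) = ∑_{k=0}^r ∑_{i=1}^n x_i^{2k}/k!` as a polynomial in `ℝ[x_1,…,x_n]`. -/
noncomputable def theta (n r : ℕ) : MvPolynomial (Fin n) ℝ :=
  ∑ k ∈ Finset.range (r + 1), ∑ i : Fin n,
    C ((1 : ℝ) / (Nat.factorial k : ℝ)) * X i ^ (2 * k)

/-- A polynomial is a sum of squares if it is a finite sum of squares of polynomials. -/
def IsSOS {n : ℕ} (p : MvPolynomial (Fin n) ℝ) : Prop :=
  ∃ (k : ℕ) (q : Fin k → MvPolynomial (Fin n) ℝ), p = ∑ i, q i ^ 2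

/-- The linear functional `L_y` sending `p = ∑_α p_α x^α` to `∑_α p_α y_α`. -/
noncomputable def Ly {n : ℕ} (y : (Fin n →₀ ℕ) → ℝ) (p : MvPolynomial (Fin n) ℝ) : ℝ :=
  ∑ α ∈ p.support, coeff α p * y α

/-- The finite set of multi-indices `α ∈ ℕ^n` with `|α| ≤ r`. -/
noncomputable def degLE (n r : ℕ) : Finset (Fin n →₀ ℕ) :=
  (Finset.Iic (Finsupp.equivFunOnFinite.symm fun _ : Fin n => r)).filter
    fun α => (α.sum fun _ e => e) ≤ r

/-- The moment matrix `M_r(y)`, indexed by multi-indices `|α| ≤ r`, `|β| ≤ r`, with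
entries `y_{α+β}`. -/
noncomputable def momentMatrix (n r : ℕ) (y : (Fin n →₀ ℕ) → ℝ) :
    Matrix ↥(degLE n r) ↥(degLE n r) ℝ :=
  fun α β => y (α.1 + β.1)

/-- The optimal value `inf 𝒬_{εr}` of the SDP relaxation. -/
noncomputable def infQ (n m : ℕ) (g : Fin m → MvPolynomial (Fin n) ℝ)
    (f : MvPolynomial (Fin n) ℝ) (ε : ℝ) (r : ℕ) : ℝ :=
  sInf {v | ∃ y : (Fin n →₀ ℕ) → ℝ, y 0 = 1 ∧ (momentMatrix n r y).PosSemidef ∧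
    (∀ j, Ly y ((g j) ^ 2) ≤ 0) ∧ v = Ly y (f + C ε * theta n r)}

/-- The optimal value `sup 𝒬*_{εr}` of the dual SDP. -/
noncomputable def supQdual (n m : ℕ) (g : Fin m → MvPolynomial (Fin n) ℝ)
    (f : MvPolynomial (Fin n) ℝ) (ε : ℝ) (r : ℕ) : ℝ :=
  sSup {v | ∃ (γ : ℝ) (lam : Fin m → ℝ) (q : MvPolynomial (Fin n) ℝ),
    (∀ j, 0 ≤ lam j) ∧ IsSOS q ∧ q.totalDegree ≤ 2 * r ∧
    f + C ε * theta n r - C γ = q - ∑ j, C (lam j) * g j ^ 2 ∧ v = γ}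

/-!
The crux is that a nonnegative polynomial `h` satisfies `h + ε θ_r ∈ Σ²` for all large `r`.
For each `t ≠ 0`, the substitution `x_i ↦ t⁻¹ sin (t x_i) cos (t x_i)` turns `h` into a polynomial
in the functions `u_i²`, where `u_i = (sin (t x_i) + cos (t x_i)) / √2`. Since `1 - u_i²` is also a
square, Bernstein approximation on `[0, 1]` shows the result to be a limit of sums of squares, and
it tends to `h` as `t → 0`. All power series involved are of exponential type, and truncating them
leaves sums of squares `s` of polynomials which converge to `h` in the norm with weights `⌈|α|/2⌉!`.
This norm is the one for which a polynomial `e` of degree at most `2r` and small norm is at most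
`ε θ_r` modulo sums of squares, by splitting `x^α = x^β x^γ` with `|β|, |γ| ≤ ⌈|α|/2⌉`; apply this
to `e = s - h`.

On `V` the polynomial `f - f* + (ε/2) θ_d` is positive, and it is coercive for `2d > deg f`, so
adding `M ∑ g_j²` for a large constant `M` makes it nonnegative on all of `ℝⁿ`. Hence `f*` is
feasible for the dual program with `λ_j = M`. The remaining bounds are weak duality and the value
of the primal program at the moments of the Dirac measure at `x*`.
-/

section ExponentialType

open scoped NNReal Nat MvPowerSeries.WithPiTopology
open Finset.HasAntidiagonal (antidiagonal mem_antidiagonal)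

variable {σ ι : Type*}

/-- The coefficients of `a` are dominated by those of an exponential: `|a_α| ≤ A c^|α| / |α|!`. -/
def ExpBound (A c : ℝ≥0) (a : MvPowerSeries σ ℝ) : Prop :=
  ∀ α, |MvPowerSeries.coeff α a| ≤ A * c ^ α.degree / α.degree !

theorem ExpBound.mono {A c A' c' : ℝ≥0} {a : MvPowerSeries σ ℝ} (h : ExpBound A c a)
    (hA : A ≤ A') (hc : c ≤ c') : ExpBound A' c' a := fun α ↦
  (h α).trans (by gcongr)

theorem ExpBound.add {A B c : ℝ≥0} {a b : MvPowerSeries σ ℝ} (ha : ExpBound A c a)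
    (hb : ExpBound B c b) : ExpBound (A + B) c (a + b) := fun α ↦ calc
  _ ≤ |MvPowerSeries.coeff α a| + |MvPowerSeries.coeff α b| := by
    rw [map_add]; exact abs_add_le _ _
  _ ≤ A * c ^ α.degree / α.degree ! + B * c ^ α.degree / α.degree ! := add_le_add (ha α) (hb α)
  _ = _ := by push_cast; ring

theorem card_antidiagonal_le_two_pow_degree [DecidableEq σ] (α : σ →₀ ℕ) :
    (antidiagonal α).card ≤ 2 ^ α.degree := by
  calc (antidiagonal α).card
      ≤ (Finset.Iic α).card := by
        refine Finset.card_le_card_of_injOn Prod.fst (fun p hp ↦ ?_) fun p hp q hq h ↦ ?_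
        · simpa only [Finset.coe_Iic, Set.mem_Iic] using
            Finset.HasAntidiagonal.antidiagonal.fst_le hp
        · refine Prod.ext h (add_left_cancel (a := p.1) ?_)
          rw [mem_antidiagonal.mp hp, h, mem_antidiagonal.mp hq]
    _ = ∏ i ∈ α.support, (α i + 1) := by simp [Finsupp.card_Iic]
    _ ≤ ∏ i ∈ α.support, 2 ^ α i := Finset.prod_le_prod' fun i _ ↦ Nat.lt_two_pow_self
    _ = 2 ^ α.degree := by rw [Finset.prod_pow_eq_pow_sum, Finsupp.degree_apply]

theorem one_div_factorial_mul_one_div_factorial_le (j k : ℕ) :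
    (1 : ℝ) / j ! * (1 / k !) ≤ 2 ^ (j + k) / (j + k)! := by
  have choose_le : ((j + k).choose k : ℝ) ≤ 2 ^ (j + k) := by
    exact_mod_cast Nat.choose_le_two_pow _ _
  have choose_mul : ((j + k).choose k : ℝ) * j ! * k ! = (j + k)! := by
    exact_mod_cast Nat.add_choose_mul_factorial_mul_factorial j k
  calc (1 : ℝ) / j ! * (1 / k !) = (j + k).choose k / (j + k)! := by
        have : (((j + k).choose k : ℕ) : ℝ) ≠ 0 := by
          exact_mod_cast (Nat.choose_pos (Nat.le_add_left k j)).ne'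
        rw [← choose_mul]; field_simp
    _ ≤ _ := by gcongr

theorem ExpBound.mul {A B c : ℝ≥0} {a b : MvPowerSeries σ ℝ} (ha : ExpBound A c a)
    (hb : ExpBound B c b) : ExpBound (A * B) (4 * c) (a * b) := by
  classical
  intro α
  have term_le : ∀ p ∈ antidiagonal α,
      |MvPowerSeries.coeff p.1 a * MvPowerSeries.coeff p.2 b| ≤
        A * B * c ^ α.degree * (2 ^ α.degree / α.degree !) := by
    intro p hp
    rw [mem_antidiagonal] at hp
    rw [← hp, map_add, abs_mul]
    calc _ ≤ ((A * c ^ p.1.degree / p.1.degree ! : ℝ)) * (B * c ^ p.2.degree / p.2.degree !) :=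
          mul_le_mul (ha p.1) (hb p.2) (abs_nonneg _) (by positivity)
      _ = A * B * c ^ (p.1.degree + p.2.degree) *
            ((1 : ℝ) / p.1.degree ! * (1 / p.2.degree !)) := by
        rw [pow_add]; ring
      _ ≤ _ := by gcongr; exact one_div_factorial_mul_one_div_factorial_le _ _
  calc |MvPowerSeries.coeff α (a * b)|
      ≤ ∑ p ∈ antidiagonal α,
          |MvPowerSeries.coeff p.1 a * MvPowerSeries.coeff p.2 b| := by
        rw [MvPowerSeries.coeff_mul]; exact Finset.abs_sum_le_sum_abs _ _
    _ ≤ (antidiagonal α).card *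
          (A * B * c ^ α.degree * (2 ^ α.degree / α.degree !)) := by
        rw [← nsmul_eq_mul]; exact Finset.sum_le_card_nsmul _ _ _ term_le
    _ ≤ 2 ^ α.degree * (A * B * c ^ α.degree * (2 ^ α.degree / α.degree !)) := by
        gcongr; exact_mod_cast card_antidiagonal_le_two_pow_degree α
    _ = ↑(A * B) * ↑(4 * c) ^ α.degree / α.degree ! := by
        push_cast; rw [show (4 : ℝ) = 2 * 2 by norm_num, mul_pow, mul_pow]; ring

theorem ExpBound.algebraMap (r : ℝ) :
    ExpBound ‖r‖₊ 0 (algebraMap ℝ (MvPowerSeries σ ℝ) r) := by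
  classical
  intro α
  rw [MvPowerSeries.algebraMap_apply, MvPowerSeries.coeff_C]
  rcases eq_or_ne α 0 with rfl | hα
  · simp
  · simpa [hα] using by positivity

/-- The families of power series that are, eventually along `l`, of uniform exponential type. -/
def uniformExpType (σ : Type*) (l : Filter ι) : Subalgebra ℝ (ι → MvPowerSeries σ ℝ) where
  carrier := {u | ∃ A c : ℝ≥0, ∀ᶠ k in l, ExpBound A c (u k)}
  mul_mem' := by
    rintro u v ⟨A, c, hu⟩ ⟨B, d, hv⟩
    refine ⟨A * B, 4 * max c d, ?_⟩
    filter_upwards [hu, hv] with k hu hv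
    exact (hu.mono le_rfl (le_max_left c d)).mul (hv.mono le_rfl (le_max_right c d))
  add_mem' := by
    rintro u v ⟨A, c, hu⟩ ⟨B, d, hv⟩
    refine ⟨A + B, max c d, ?_⟩
    filter_upwards [hu, hv] with k hu hv
    exact (hu.mono le_rfl (le_max_left c d)).add (hv.mono le_rfl (le_max_right c d))
  algebraMap_mem' r := ⟨‖r‖₊, 0, .of_forall fun _ ↦ .algebraMap r⟩

/-- Coefficientwise convergence of a family of uniform exponential type. -/
structure DominatedTendsto (u : ι → MvPowerSeries σ ℝ) (l : Filter ι)
    (a : MvPowerSeries σ ℝ) : Prop where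
  mem_uniformExpType : u ∈ uniformExpType σ l
  tendsto : Tendsto u l (𝓝 a)

namespace DominatedTendsto

variable {l : Filter ι} {u v : ι → MvPowerSeries σ ℝ} {a b : MvPowerSeries σ ℝ}

theorem tendsto_coeff (hu : DominatedTendsto u l a) (α : σ →₀ ℕ) :
    Tendsto (fun k ↦ MvPowerSeries.coeff α (u k)) l (𝓝 (MvPowerSeries.coeff α a)) :=
  (MvPowerSeries.WithPiTopology.tendsto_iff_coeff_tendsto _ _ _).mp hu.tendsto α

theorem add (hu : DominatedTendsto u l a) (hv : DominatedTendsto v l b) :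
    DominatedTendsto (fun k ↦ u k + v k) l (a + b) :=
  ⟨add_mem hu.1 hv.1, hu.2.add hv.2⟩

theorem mul (hu : DominatedTendsto u l a) (hv : DominatedTendsto v l b) :
    DominatedTendsto (fun k ↦ u k * v k) l (a * b) :=
  ⟨mul_mem hu.1 hv.1, hu.2.mul hv.2⟩

theorem pow (hu : DominatedTendsto u l a) (j : ℕ) : DominatedTendsto (fun k ↦ u k ^ j) l (a ^ j) :=
  ⟨pow_mem hu.1 j, hu.2.pow j⟩

theorem prod {κ : Type*} (s : Finset κ) {u : κ → ι → MvPowerSeries σ ℝ}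
    {a : κ → MvPowerSeries σ ℝ} (h : ∀ i ∈ s, DominatedTendsto (u i) l (a i)) :
    DominatedTendsto (fun k ↦ ∏ i ∈ s, u i k) l (∏ i ∈ s, a i) := by
  refine ⟨?_, tendsto_finsetProd s fun i hi ↦ (h i hi).2⟩
  simpa only [Finset.prod_fn] using prod_mem fun i hi ↦ (h i hi).1

theorem algebraMap {t : ι → ℝ} {s : ℝ} (ht : Tendsto t l (𝓝 s)) :
    DominatedTendsto (fun k ↦ algebraMap ℝ (MvPowerSeries σ ℝ) (t k)) l (algebraMap ℝ _ s) := by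
  refine ⟨⟨‖s‖₊ + 1, 0, ?_⟩, (MvPowerSeries.WithPiTopology.continuous_C.tendsto s).comp ht⟩
  filter_upwards [ht.nnnorm.eventually_le_const (lt_add_one ‖s‖₊)] with k hk
  exact (ExpBound.algebraMap (t k)).mono hk le_rfl

theorem smul {t : ι → ℝ} {s : ℝ} (ht : Tendsto t l (𝓝 s)) (hu : DominatedTendsto u l a) :
    DominatedTendsto (fun k ↦ t k • u k) l (s • a) := by
  simpa only [Algebra.smul_def] using (algebraMap ht).mul hu

theorem aeval {τ : Type*} {u : τ → ι → MvPowerSeries σ ℝ} {a : τ → MvPowerSeries σ ℝ}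
    (h : ∀ i, DominatedTendsto (u i) l (a i)) (p : MvPolynomial τ ℝ) :
    DominatedTendsto (fun k ↦ MvPolynomial.aeval (u · k) p) l (MvPolynomial.aeval a p) := by
  induction p using MvPolynomial.induction_on with
  | C r => simpa only [MvPolynomial.aeval_C] using algebraMap tendsto_const_nhds
  | add p q hp hq => simpa only [map_add] using hp.add hq
  | mul_X p i hp => simpa only [map_mul, MvPolynomial.aeval_X] using hp.mul (h i)

end DominatedTendsto

end ExponentialType

section WeightedNorm

open scoped NNReal ENNReal Nat

variable {σ ι : Type*}

theorem summable_pow_degree [Finite σ] {c : ℝ} (hc0 : 0 ≤ c) (hc1 : c < 1) :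
    Summable fun α : σ →₀ ℕ ↦ c ^ α.degree := by
  classical
  cases nonempty_fintype σ
  suffices Summable fun α : σ → ℕ ↦ ∏ i, c ^ α i by
    simpa only [Finset.prod_pow_eq_pow_sum, Finsupp.degree_eq_sum] using!
      Finsupp.equivFunOnFinite.summable_iff.mpr this
  refine summable_of_sum_le (c := ∏ _i : σ, (1 - c)⁻¹) (fun α ↦ by positivity) fun s ↦ ?_
  calc ∑ α ∈ s, ∏ i, c ^ α i
      ≤ ∑ α ∈ Fintype.piFinset fun i ↦ s.image (· i), ∏ i, c ^ α i := by
        refine Finset.sum_le_sum_of_subset_of_nonneg (fun α hα ↦ ?_) fun _ _ _ ↦ by positivity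
        exact Fintype.mem_piFinset.mpr fun i ↦ Finset.mem_image_of_mem (· i) hα
    _ = ∏ i, ∑ k ∈ s.image (· i), c ^ k := (Finset.prod_univ_sum _ _).symm
    _ ≤ ∏ _i : σ, (1 - c)⁻¹ := by
        gcongr with i
        rw [← tsum_geometric_of_lt_one hc0 hc1]
        exact (summable_geometric_of_lt_one hc0 hc1).sum_le_tsum _ fun _ _ ↦ by positivity

theorem exists_pow_div_factorial_mul_factorial_le (c : ℝ≥0) :
    ∃ B : ℝ≥0, ∀ k : ℕ, (c : ℝ) ^ k / k ! * ((k + 1) / 2)! ≤ B * (1 / 2) ^ k := by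
  set M : ℝ := 1 + 2 * c
  have one_le_M : 1 ≤ M := by simp [M]
  refine ⟨⟨M * Real.exp (M ^ 2), by positivity⟩, fun k ↦ ?_⟩
  have factorial_mul_le : ((k + 1) / 2)! * (k / 2)! ≤ k ! := by
    have h := Nat.le_of_dvd (Nat.factorial_pos _) (Nat.factorial_mul_factorial_dvd_factorial
      (show (k + 1) / 2 ≤ k by omega))
    rwa [show k - (k + 1) / 2 = k / 2 by omega] at h
  have factorial_mul_le' : (((k + 1) / 2)! * (k / 2)! : ℝ) ≤ k ! := by
    exact_mod_cast factorial_mul_le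
  calc (c : ℝ) ^ k / k ! * ((k + 1) / 2)! ≤ c ^ k / (k / 2)! := by
        rw [div_mul_eq_mul_div, div_le_div_iff₀ (by positivity) (by positivity), mul_assoc]
        gcongr
    _ = (2 * c) ^ k / (k / 2)! * (1 / 2) ^ k := by rw [mul_pow, one_div_pow]; field_simp
    _ ≤ M ^ (2 * (k / 2) + 1) / (k / 2)! * (1 / 2) ^ k := by
        gcongr ?_ / _ * _
        exact (pow_le_pow_left₀ (by positivity) (by simp [M]) k).trans
          (pow_le_pow_right₀ one_le_M (by omega))
    _ = M * ((M ^ 2) ^ (k / 2) / (k / 2)!) * (1 / 2) ^ k := by rw [pow_succ, pow_mul]; ring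
    _ ≤ M * Real.exp (M ^ 2) * (1 / 2) ^ k := by
        gcongr
        exact Real.pow_div_factorial_le_exp _ (by positivity) _

/-- The norm `∑ |a_α| w_α` with weights `w_α = ⌈|α|/2⌉!`: up to a constant depending only on the
number of variables, `θ_r` dominates the monomial `w_α⁻¹ x^α` in the sum-of-squares order. -/
noncomputable def weightedNorm (a : MvPowerSeries σ ℝ) : ℝ≥0∞ :=
  ∑' α, ‖MvPowerSeries.coeff α a‖ₑ * ((α.degree + 1) / 2)!

theorem weightedNorm_zero : weightedNorm (0 : MvPowerSeries σ ℝ) = 0 := by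
  simp [weightedNorm]

theorem weightedNorm_add_le (a b : MvPowerSeries σ ℝ) :
    weightedNorm (a + b) ≤ weightedNorm a + weightedNorm b := by
  rw [weightedNorm, weightedNorm, weightedNorm, ← ENNReal.tsum_add]
  refine ENNReal.tsum_le_tsum fun α ↦ ?_
  rw [map_add, ← add_mul]
  gcongr
  exact enorm_add_le _ _

theorem weightedNorm_smul (r : ℝ) (a : MvPowerSeries σ ℝ) :
    weightedNorm (r • a) = ‖r‖ₑ * weightedNorm a := by
  simp only [weightedNorm, map_smul, smul_eq_mul, enorm_mul, mul_assoc, ENNReal.tsum_mul_left]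

theorem ExpBound.exists_coeff_mul_le (A c : ℝ≥0) : ∃ B : ℝ≥0, ∀ a : MvPowerSeries σ ℝ,
    ExpBound A c a → ∀ α, |MvPowerSeries.coeff α a| * ((α.degree + 1) / 2)! ≤
      B * (1 / 2) ^ α.degree := by
  obtain ⟨B, hB⟩ := exists_pow_div_factorial_mul_factorial_le c
  refine ⟨A * B, fun a ha α ↦ ?_⟩
  calc |MvPowerSeries.coeff α a| * ((α.degree + 1) / 2)!
      ≤ A * c ^ α.degree / α.degree ! * ((α.degree + 1) / 2)! := by gcongr; exact ha α
    _ = A * (c ^ α.degree / α.degree ! * ((α.degree + 1) / 2)!) := by ring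
    _ ≤ A * (B * (1 / 2 : ℝ) ^ α.degree) := by
        exact mul_le_mul_of_nonneg_left (hB _) A.coe_nonneg
    _ = ↑(A * B) * (1 / 2) ^ α.degree := by push_cast; ring

theorem DominatedTendsto.exists_expBound {l : Filter ι} [l.NeBot] {u : ι → MvPowerSeries σ ℝ}
    {a : MvPowerSeries σ ℝ} (h : DominatedTendsto u l a) : ∃ A c : ℝ≥0, ExpBound A c a := by
  obtain ⟨A, c, hAc⟩ := h.mem_uniformExpType
  exact ⟨A, c, fun α ↦ le_of_tendsto (h.tendsto_coeff α).abs (hAc.mono fun k hk ↦ hk α)⟩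

theorem DominatedTendsto.tendsto_weightedNorm_sub [Finite σ] {l : Filter ι} [l.NeBot]
    {u : ι → MvPowerSeries σ ℝ} {a : MvPowerSeries σ ℝ} (h : DominatedTendsto u l a) :
    Tendsto (fun k ↦ weightedNorm (u k - a)) l (𝓝 0) := by
  obtain ⟨A₀, c₀, ha⟩ := h.exists_expBound
  obtain ⟨A, c, hAc⟩ : (fun k ↦ u k - a) ∈ uniformExpType σ l :=
    sub_mem h.mem_uniformExpType ⟨A₀, c₀, .of_forall fun _ ↦ ha⟩
  obtain ⟨B, hB⟩ := ExpBound.exists_coeff_mul_le (σ := σ) A c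
  set w : (σ →₀ ℕ) → ℝ := fun α ↦ ((α.degree + 1) / 2)!
  have summable_bound : Summable fun α : σ →₀ ℕ ↦ (B : ℝ) * (1 / 2) ^ α.degree :=
    (summable_pow_degree (by norm_num) (by norm_num)).mul_left _
  have term_tendsto (α : σ →₀ ℕ) :
      Tendsto (fun k ↦ |MvPowerSeries.coeff α (u k - a)| * w α) l (𝓝 0) := by
    have := (h.tendsto_coeff α).sub_const (MvPowerSeries.coeff α a)
    simpa using this.abs.mul_const (w α)
  have tsum_tendsto := tendsto_tsum_of_dominated_convergence summable_bound term_tendsto <| by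
    filter_upwards [hAc] with k hk α
    simpa [w, abs_mul] using hB _ hk α
  rw [tsum_zero] at tsum_tendsto
  have := ENNReal.tendsto_ofReal tsum_tendsto
  rw [ENNReal.ofReal_zero] at this
  refine this.congr' ?_
  filter_upwards [hAc] with k hk
  have nonneg (α : σ →₀ ℕ) : 0 ≤ |MvPowerSeries.coeff α (u k - a)| * w α := by positivity
  rw [ENNReal.ofReal_tsum_of_nonneg nonneg (.of_nonneg_of_le nonneg (hB _ hk) summable_bound)]
  refine tsum_congr fun α ↦ ?_
  rw [ENNReal.ofReal_mul (abs_nonneg _), ENNReal.ofReal_natCast, ← Real.norm_eq_abs,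
    ofReal_norm]

end WeightedNorm

section SumSqLimit

open scoped NNReal

variable {σ ι : Type*}

/-- Membership in the closure of the cone of sums of squares of polynomials for `weightedNorm`. -/
def IsSumSqLimit (a : MvPowerSeries σ ℝ) : Prop :=
  ∀ η > 0, ∃ s : MvPolynomial σ ℝ, IsSumSq s ∧ weightedNorm ((s : MvPowerSeries σ ℝ) - a) < η

theorem isSumSq_smul {R : Type*} [CommRing R] [Algebra ℝ R] {r : ℝ} (hr : 0 ≤ r) {s : R}
    (hs : IsSumSq s) : IsSumSq (r • s) := by
  rw [Algebra.smul_def, ← Real.mul_self_sqrt hr, map_mul]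
  exact (IsSumSq.mul_self _).mul hs

namespace IsSumSqLimit

variable {a b : MvPowerSeries σ ℝ}

theorem of_isSumSq {s : MvPolynomial σ ℝ} (hs : IsSumSq s) :
    IsSumSqLimit (s : MvPowerSeries σ ℝ) := fun η hη ↦
  ⟨s, hs, by rwa [sub_self, weightedNorm_zero]⟩

theorem add (ha : IsSumSqLimit a) (hb : IsSumSqLimit b) : IsSumSqLimit (a + b) := fun η hη ↦ by
  obtain ⟨s, hs, hsa⟩ := ha (η / 2) (ENNReal.half_pos hη.ne')
  obtain ⟨t, ht, htb⟩ := hb (η / 2) (ENNReal.half_pos hη.ne')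
  refine ⟨s + t, hs.add ht, ?_⟩
  rw [MvPolynomial.coe_add, add_sub_add_comm, ← ENNReal.add_halves η]
  exact (weightedNorm_add_le _ _).trans_lt (ENNReal.add_lt_add hsa htb)

theorem smul (ha : IsSumSqLimit a) {r : ℝ} (hr : 0 ≤ r) : IsSumSqLimit (r • a) := fun η hη ↦ by
  obtain ⟨s, hs, hsa⟩ := ha (η / ‖r‖ₑ) (ENNReal.div_pos hη.ne' enorm_ne_top)
  refine ⟨r • s, isSumSq_smul hr hs, ?_⟩
  rw [MvPolynomial.coe_smul, ← smul_sub, weightedNorm_smul, mul_comm]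
  exact ENNReal.mul_lt_of_lt_div hsa

theorem sum {κ : Type*} {s : Finset κ} {a : κ → MvPowerSeries σ ℝ}
    (h : ∀ i ∈ s, IsSumSqLimit (a i)) : IsSumSqLimit (∑ i ∈ s, a i) :=
  Finset.sum_induction a IsSumSqLimit (fun _ _ ↦ add)
    (MvPolynomial.coe_zero (σ := σ) (R := ℝ) ▸ of_isSumSq .zero) h

theorem of_tendsto {l : Filter ι} [l.NeBot] {u : ι → MvPowerSeries σ ℝ}
    (hu : ∀ᶠ k in l, IsSumSqLimit (u k))
    (h : Tendsto (fun k ↦ weightedNorm (u k - a)) l (𝓝 0)) : IsSumSqLimit a := fun η hη ↦ by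
  have half_pos := ENNReal.half_pos hη.ne'
  obtain ⟨k, huk, hk⟩ := (hu.and (h.eventually_lt_const half_pos)).exists
  obtain ⟨s, hs, hsu⟩ := huk (η / 2) half_pos
  refine ⟨s, hs, ?_⟩
  rw [← sub_add_sub_cancel _ (u k), ← ENNReal.add_halves η]
  exact (weightedNorm_add_le _ _).trans_lt (ENNReal.add_lt_add hsu hk)

end IsSumSqLimit

theorem ExpBound.dominatedTendsto_truncTotal [Finite σ] {a : MvPowerSeries σ ℝ} {A c : ℝ≥0}
    (ha : ExpBound A c a) : DominatedTendsto
      (fun k ↦ (MvPowerSeries.truncTotal k a : MvPowerSeries σ ℝ)) atTop a where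
  mem_uniformExpType := ⟨A, c, .of_forall fun k α ↦ by
    rw [MvPolynomial.coeff_coe, MvPowerSeries.coeff_truncTotal_eq_ite]
    split_ifs
    · exact ha α
    · rw [abs_zero]; positivity⟩
  tendsto := by
    refine (MvPowerSeries.WithPiTopology.tendsto_iff_coeff_tendsto _ _ _).mpr fun α ↦
      tendsto_const_nhds.congr' ?_
    filter_upwards [eventually_gt_atTop α.degree] with k hk
    rw [MvPolynomial.coeff_coe, MvPowerSeries.coeff_truncTotal a hk]

theorem ExpBound.isSumSqLimit_sq [Finite σ] {a : MvPowerSeries σ ℝ} {A c : ℝ≥0}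
    (ha : ExpBound A c a) : IsSumSqLimit (a ^ 2) := by
  refine .of_tendsto (.of_forall fun k ↦ ?_)
    (ha.dominatedTendsto_truncTotal.pow 2).tendsto_weightedNorm_sub
  rw [← MvPolynomial.coe_pow]
  exact .of_isSumSq (IsSquare.sq _).isSumSq

end SumSqLimit

section Bernstein

open scoped NNReal MvPowerSeries.WithPiTopology

theorem cast_mul_descFactorial {R : Type*} [CommRing R] (k j : ℕ) :
    (k : R) * k.descFactorial j = k.descFactorial (j + 1) + j * k.descFactorial j := by
  rcases le_or_gt j k with hjk | hkj
  · rw [Nat.descFactorial_succ, Nat.cast_mul, Nat.cast_sub hjk]; ring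
  · simp [Nat.descFactorial_of_lt hkj]

theorem tendsto_descFactorial_div_pow (j : ℕ) :
    Tendsto (fun m : ℕ ↦ (m.descFactorial j / m ^ j : ℝ)) atTop (𝓝 1) := by
  have pow_ne_zero : ∀ᶠ m : ℕ in atTop, (m : ℝ) ^ j ≠ 0 :=
    (eventually_ne_atTop 0).mono fun m hm ↦ by positivity
  exact (Asymptotics.isEquivalent_iff_tendsto_one pow_ne_zero).mp (isEquivalent_descFactorial j)

theorem sum_descFactorial_smul_bernsteinPolynomial (R : Type*) [CommRing R] (m j : ℕ) :
    ∑ k ∈ Finset.range (m + 1), k.descFactorial j • bernsteinPolynomial R m k =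
      m.descFactorial j • Polynomial.X ^ j := by
  rcases lt_or_ge m j with hmj | hjm
  · rw [Nat.descFactorial_of_lt hmj, zero_smul]
    refine Finset.sum_eq_zero fun k hk ↦ ?_
    rw [Nat.descFactorial_of_lt (by grind), zero_smul]
  obtain ⟨l, rfl⟩ := Nat.exists_eq_add_of_le hjm
  have choose_mul (x : ℕ) : (j + x).descFactorial j * (j + l).choose (j + x) =
      (j + l).descFactorial j * l.choose x := by
    have := Nat.choose_mul (n := j + l) (k := j + x) (s := j) (by omega)
    rw [Nat.add_sub_cancel_left, Nat.add_sub_cancel_left] at this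
    rw [Nat.descFactorial_eq_factorial_mul_choose, Nat.descFactorial_eq_factorial_mul_choose,
      mul_assoc, mul_comm ((j + x).choose j), this, mul_assoc]
  have shift (x : ℕ) : (j + x).descFactorial j • bernsteinPolynomial R (j + l) (j + x) =
      (j + l).descFactorial j • Polynomial.X ^ j * bernsteinPolynomial R l x := by
    have := congrArg (Nat.cast (R := Polynomial R)) (choose_mul x)
    push_cast at this
    simp only [bernsteinPolynomial, nsmul_eq_mul, Nat.add_sub_add_left, pow_add]
    linear_combination Polynomial.X ^ j * Polynomial.X ^ x * (1 - Polynomial.X) ^ (l - x) * this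
  rw [add_assoc, Finset.sum_range_add, Finset.sum_eq_zero fun k hk ↦ by
    rw [Nat.descFactorial_of_lt (Finset.mem_range.mp hk), zero_smul], zero_add]
  simp only [shift, ← Finset.mul_sum, bernsteinPolynomial.sum, mul_one]

variable {σ τ : Type*}

/-- The Bernstein operator of degree `m` in each variable, with the coordinates of `[0, 1]^τ`
replaced by elements of an algebra. -/
noncomputable def bernsteinApprox [Fintype τ] [DecidableEq τ] {A : Type*} [CommRing A] [Algebra ℝ A]
    (p : τ → A) (m : ℕ) (P : MvPolynomial τ ℝ) : A :=
  ∑ k ∈ Fintype.piFinset fun _ ↦ Finset.range (m + 1),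
    eval (fun i ↦ (k i / m : ℝ)) P • ∏ i, Polynomial.aeval (p i) (bernsteinPolynomial ℝ m (k i))

/-- The power series of exponential type. -/
noncomputable def expType (σ : Type*) : Subalgebra ℝ (MvPowerSeries σ ℝ) :=
  (uniformExpType σ (pure ())).comap (Pi.constAlgHom ℝ Unit (MvPowerSeries σ ℝ))

theorem mem_expType {a : MvPowerSeries σ ℝ} :
    a ∈ expType σ ↔ ∃ A c : ℝ≥0, ExpBound A c a := Iff.rfl

theorem dominatedTendsto_const {ι : Type*} {l : Filter ι} {a : MvPowerSeries σ ℝ}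
    (ha : a ∈ expType σ) : DominatedTendsto (fun _ ↦ a) l a :=
  have ⟨A, c, hAc⟩ := mem_expType.mp ha
  ⟨⟨A, c, .of_forall fun _ ↦ hAc⟩, tendsto_const_nhds⟩

/-- Rewriting the monomial `k ^ a` through falling factorials turns the Bernstein sum into a
multiple of a power of `p`, up to terms of order `1 / m`. -/
theorem dominatedTendsto_sum_smul_bernsteinPolynomial {p : MvPowerSeries σ ℝ}
    (hp : p ∈ expType σ) (a j : ℕ) :
    DominatedTendsto (fun m : ℕ ↦ ∑ k ∈ Finset.range (m + 1),
        (k ^ a * k.descFactorial j / m ^ (a + j) : ℝ) •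
          Polynomial.aeval p (bernsteinPolynomial ℝ m k)) atTop (p ^ (a + j)) := by
  induction a generalizing j with
  | zero =>
    have sum_eq (m : ℕ) : ∑ k ∈ Finset.range (m + 1),
        (k ^ 0 * k.descFactorial j / m ^ (0 + j) : ℝ) •
          Polynomial.aeval p (bernsteinPolynomial ℝ m k) =
        (m.descFactorial j / m ^ j : ℝ) • p ^ j := by
      have := congrArg (Polynomial.aeval p) (sum_descFactorial_smul_bernsteinPolynomial ℝ m j)
      simp only [map_sum, map_nsmul, map_pow, Polynomial.aeval_X] at this
      simp only [← Nat.cast_smul_eq_nsmul ℝ] at this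
      simp only [pow_zero, one_mul, zero_add, div_eq_inv_mul, mul_smul, ← Finset.smul_sum, this]
    have := ((dominatedTendsto_const hp).pow j).smul (tendsto_descFactorial_div_pow j)
    rw [one_smul] at this
    rwa [funext sum_eq, zero_add]
  | succ a ih =>
    have sum_eq (m : ℕ) : ∑ k ∈ Finset.range (m + 1),
        (k ^ (a + 1) * k.descFactorial j / m ^ (a + 1 + j) : ℝ) •
          Polynomial.aeval p (bernsteinPolynomial ℝ m k) =
        (∑ k ∈ Finset.range (m + 1), (k ^ a * k.descFactorial (j + 1) / m ^ (a + (j + 1)) : ℝ) •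
          Polynomial.aeval p (bernsteinPolynomial ℝ m k)) +
        (j / m : ℝ) • ∑ k ∈ Finset.range (m + 1),
          (k ^ a * k.descFactorial j / m ^ (a + j) : ℝ) •
            Polynomial.aeval p (bernsteinPolynomial ℝ m k) := by
      rw [Finset.smul_sum, ← Finset.sum_add_distrib]
      refine Finset.sum_congr rfl fun k _ ↦ ?_
      rw [smul_smul, ← add_smul, pow_succ, mul_assoc, cast_mul_descFactorial]
      congr 1
      ring
    have := (ih (j + 1)).add ((ih j).smul (tendsto_const_div_atTop_nhds_zero_nat (j : ℝ)))
    rw [zero_smul, add_zero] at this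
    rwa [funext sum_eq, add_assoc, add_comm 1 j]

theorem dominatedTendsto_bernsteinApprox [Fintype τ] [DecidableEq τ]
    {p : τ → MvPowerSeries σ ℝ} (hp : ∀ i, p i ∈ expType σ) (P : MvPolynomial τ ℝ) :
    DominatedTendsto (fun m ↦ bernsteinApprox p m P) atTop (MvPolynomial.aeval p P) := by
  induction P using MvPolynomial.induction_on' with
  | add P Q hP hQ =>
    simpa only [bernsteinApprox, map_add, add_smul, Finset.sum_add_distrib] using hP.add hQ
  | monomial β c =>
    have approx_eq (m : ℕ) : bernsteinApprox p m (monomial β c) =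
        c • ∏ i, ∑ k ∈ Finset.range (m + 1),
          (k ^ β i * k.descFactorial 0 / m ^ (β i + 0) : ℝ) •
            Polynomial.aeval (p i) (bernsteinPolynomial ℝ m k) := by
      rw [Finset.prod_univ_sum, Finset.smul_sum]
      refine Finset.sum_congr rfl fun k _ ↦ ?_
      rw [MvPolynomial.eval_monomial, Finsupp.prod_fintype _ _ fun i ↦ pow_zero _, mul_smul,
        Finset.prod_smul]
      simp only [div_pow, Nat.descFactorial_zero, Nat.cast_one, mul_one, add_zero]
    rw [funext approx_eq, MvPolynomial.aeval_monomial, ← Algebra.smul_def,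
      Finsupp.prod_fintype _ _ fun i ↦ pow_zero _]
    exact (DominatedTendsto.prod Finset.univ fun i _ ↦
      dominatedTendsto_sum_smul_bernsteinPolynomial (hp i) (β i) 0).smul tendsto_const_nhds

theorem aeval_sq_bernsteinPolynomial {A : Type*} [CommRing A] [Algebra ℝ A] {u v : A}
    (huv : u ^ 2 + v ^ 2 = 1) (m k : ℕ) :
    Polynomial.aeval (u ^ 2) (bernsteinPolynomial ℝ m k) =
      (m.choose k : ℝ) • (u ^ k * v ^ (m - k)) ^ 2 := by
  rw [← eq_sub_iff_add_eq'] at huv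
  simp [bernsteinPolynomial, ← huv, Algebra.smul_def, mul_pow, ← pow_mul, mul_comm, mul_assoc]

theorem isSumSqLimit_bernsteinApprox_sq [Finite σ] [Fintype τ] [DecidableEq τ]
    {u v : τ → MvPowerSeries σ ℝ} (hu : ∀ i, u i ∈ expType σ) (hv : ∀ i, v i ∈ expType σ)
    (huv : ∀ i, u i ^ 2 + v i ^ 2 = 1) {P : MvPolynomial τ ℝ}
    (hP : ∀ x ∈ Set.Icc (0 : τ → ℝ) 1, 0 ≤ eval x P) (m : ℕ) :
    IsSumSqLimit (bernsteinApprox (u · ^ 2) m P) := by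
  refine IsSumSqLimit.sum fun k hk ↦ ?_
  have div_mem_Icc : (fun i ↦ (k i / m : ℝ)) ∈ Set.Icc (0 : τ → ℝ) 1 := by
    refine ⟨fun i ↦ by positivity, fun i ↦ div_le_one_of_le₀ ?_ (by positivity)⟩
    exact Nat.cast_le.mpr (Finset.mem_range_succ_iff.mp (Fintype.mem_piFinset.mp hk i))
  simp only [aeval_sq_bernsteinPolynomial (huv _), Finset.prod_smul, Finset.prod_pow]
  refine .smul (.smul ?_ (by positivity)) (hP _ div_mem_Icc)
  obtain ⟨A, c, hAc⟩ := mem_expType.mp <| prod_mem (t := Finset.univ) fun i _ ↦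
    mul_mem (pow_mem (hu i) (k i)) (pow_mem (hv i) (m - k i))
  exact hAc.isSumSqLimit_sq

theorem isSumSqLimit_aeval_sq [Finite σ] [Finite τ] {u v : τ → MvPowerSeries σ ℝ}
    (hu : ∀ i, u i ∈ expType σ) (hv : ∀ i, v i ∈ expType σ)
    (huv : ∀ i, u i ^ 2 + v i ^ 2 = 1) {P : MvPolynomial τ ℝ}
    (hP : ∀ x ∈ Set.Icc (0 : τ → ℝ) 1, 0 ≤ eval x P) :
    IsSumSqLimit (aeval (u · ^ 2) P) := by
  classical
  cases nonempty_fintype τ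
  exact .of_tendsto (.of_forall (isSumSqLimit_bernsteinApprox_sq hu hv huv hP))
    (dominatedTendsto_bernsteinApprox (fun i ↦ pow_mem (hu i) 2) P).tendsto_weightedNorm_sub

end Bernstein

section Trigonometric

open scoped Nat

theorem derivative_sin (A : Type*) [CommRing A] [Algebra ℚ A] :
    PowerSeries.derivative A (PowerSeries.sin A) = PowerSeries.cos A := by
  ext k
  rw [PowerSeries.coeff_derivative, PowerSeries.sin, PowerSeries.cos, PowerSeries.coeff_mk,
    PowerSeries.coeff_mk]
  rcases Nat.even_or_odd k with hk | hk
  · have half : (k + 1) / 2 = k / 2 := by grind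
    have cast : (k + 1 : A) = algebraMap ℚ A (k + 1) := by simp
    rw [if_neg (Nat.not_even_iff_odd.mpr hk.add_one), if_pos hk, half, cast, ← map_mul,
      Nat.factorial_succ, Nat.cast_mul, Nat.cast_succ]
    congr 1
    field_simp
  · rw [if_pos hk.add_one, if_neg (Nat.not_even_iff_odd.mpr hk), zero_mul]

theorem derivative_cos (A : Type*) [CommRing A] [Algebra ℚ A] :
    PowerSeries.derivative A (PowerSeries.cos A) = -PowerSeries.sin A := by
  ext k
  rw [PowerSeries.coeff_derivative, map_neg, PowerSeries.sin, PowerSeries.cos,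
    PowerSeries.coeff_mk, PowerSeries.coeff_mk]
  rcases Nat.even_or_odd k with hk | hk
  · rw [if_neg (Nat.not_even_iff_odd.mpr hk.add_one), if_pos hk, zero_mul, neg_zero]
  · have half : (k + 1) / 2 = k / 2 + 1 := by grind
    have cast : (k + 1 : A) = algebraMap ℚ A (k + 1) := by simp
    rw [if_pos hk.add_one, if_neg (Nat.not_even_iff_odd.mpr hk), half, cast, ← map_mul, ← map_neg,
      Nat.factorial_succ, Nat.cast_mul, Nat.cast_succ, pow_succ]
    congr 1
    field_simp

theorem constantCoeff_sin (A : Type*) [Ring A] [Algebra ℚ A] :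
    PowerSeries.constantCoeff (PowerSeries.sin A) = 0 := by
  simp [PowerSeries.sin, ← PowerSeries.coeff_zero_eq_constantCoeff_apply]

theorem constantCoeff_cos (A : Type*) [Ring A] [Algebra ℚ A] :
    PowerSeries.constantCoeff (PowerSeries.cos A) = 1 := by
  simp [PowerSeries.cos, ← PowerSeries.coeff_zero_eq_constantCoeff_apply]

theorem sin_sq_add_cos_sq (A : Type*) [CommRing A] [Algebra ℚ A] [IsAddTorsionFree A] :
    PowerSeries.sin A ^ 2 + PowerSeries.cos A ^ 2 = 1 := by
  refine PowerSeries.derivative.ext ?_ ?_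
  · rw [map_add, PowerSeries.derivative_pow, PowerSeries.derivative_pow, derivative_sin,
      derivative_cos, PowerSeries.derivative_one]
    ring
  · simp [constantCoeff_sin, constantCoeff_cos]

theorem abs_coeff_sin_le (k : ℕ) : |PowerSeries.coeff k (PowerSeries.sin ℝ)| ≤ 1 / k ! := by
  rw [PowerSeries.sin, PowerSeries.coeff_mk]
  split_ifs
  · rw [abs_zero]; positivity
  · simp [abs_div]

theorem abs_coeff_cos_le (k : ℕ) : |PowerSeries.coeff k (PowerSeries.cos ℝ)| ≤ 1 / k ! := by
  rw [PowerSeries.cos, PowerSeries.coeff_mk]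
  split_ifs
  · simp [abs_div]
  · rw [abs_zero]; positivity

variable {σ ι : Type*} {l : Filter ι}

/-- The substitution `f ↦ f (t x_i)`. -/
noncomputable def scaledSubst {R : Type*} [CommRing R] (t : R) (i : σ) :
    PowerSeries R →ₐ[R] MvPowerSeries σ R :=
  (PowerSeries.substAlgHom (PowerSeries.HasSubst.X i)).comp (PowerSeries.rescaleAlgHom t)

theorem coeff_scaledSubst [DecidableEq σ] {R : Type*} [CommRing R] (t : R) (i : σ)
    (f : PowerSeries R) (α : σ →₀ ℕ) : MvPowerSeries.coeff α (scaledSubst t i f) =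
      if α = Finsupp.single i (α i) then t ^ α i * PowerSeries.coeff (α i) f else 0 := by
  rw [scaledSubst, AlgHom.comp_apply, PowerSeries.coe_substAlgHom, PowerSeries.coeff_subst_single,
    PowerSeries.rescaleAlgHom, MvPowerSeries.rescaleAlgHom_apply, ← PowerSeries.rescale_eq,
    PowerSeries.coeff_rescale]

theorem scaledSubst_X {R : Type*} [CommRing R] (t : R) (i : σ) :
    scaledSubst t i PowerSeries.X = t • MvPowerSeries.X i := by
  have rescale_X : PowerSeries.rescaleAlgHom t PowerSeries.X =
      t • (PowerSeries.X : PowerSeries R) := by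
    rw [PowerSeries.rescaleAlgHom, MvPowerSeries.rescaleAlgHom_apply, ← PowerSeries.rescale_eq,
      PowerSeries.rescale_X, ← PowerSeries.smul_eq_C_mul]
  rw [scaledSubst, AlgHom.comp_apply, rescale_X, map_smul, PowerSeries.coe_substAlgHom,
    PowerSeries.subst_X (PowerSeries.HasSubst.X i)]

theorem expBound_scaledSubst {f : PowerSeries ℝ}
    (hf : ∀ k, |PowerSeries.coeff k f| ≤ 1 / k !) (t : ℝ) (i : σ) :
    ExpBound 1 ‖t‖₊ (scaledSubst t i f) := by
  classical
  intro α
  rw [coeff_scaledSubst]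
  split_ifs with hα
  · rw [hα, Finsupp.degree_single, Finsupp.single_eq_same, abs_mul, abs_pow, NNReal.coe_one,
      one_mul, coe_nnnorm, Real.norm_eq_abs, div_eq_mul_one_div]
    gcongr
    exact hf _
  · rw [abs_zero]; positivity

theorem dominatedTendsto_scaledSubst {f : PowerSeries ℝ}
    (hf : ∀ k, |PowerSeries.coeff k f| ≤ 1 / k !) {t : ι → ℝ} (ht : Tendsto t l (𝓝 0)) (i : σ) :
    DominatedTendsto (fun k ↦ scaledSubst (t k) i f) l
      (algebraMap ℝ _ (PowerSeries.constantCoeff f)) := by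
  classical
  refine ⟨⟨1, 1, ?_⟩, (MvPowerSeries.WithPiTopology.tendsto_iff_coeff_tendsto _ _ _).mpr ?_⟩
  · filter_upwards [ht.nnnorm.eventually_le_const (nnnorm_zero.trans_lt one_pos)] with k hk
    exact (expBound_scaledSubst hf (t k) i).mono le_rfl hk
  · intro α
    simp only [coeff_scaledSubst, MvPowerSeries.algebraMap_apply, MvPowerSeries.coeff_C]
    rcases eq_or_ne α 0 with rfl | hα
    · simpa using tendsto_const_nhds
    rw [if_neg hα]
    by_cases hi : α = Finsupp.single i (α i)
    · have hαi : α i ≠ 0 := fun h ↦ hα (by rw [hi, h, Finsupp.single_zero])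
      simp only [if_pos hi]
      simpa [hαi] using (ht.pow (α i)).mul_const (PowerSeries.coeff (α i) f)
    · simpa only [if_neg hi] using tendsto_const_nhds

theorem isSumSqLimit_aeval_smul_mul [Finite σ] {S K : σ → MvPowerSeries σ ℝ}
    (hS : ∀ i, S i ∈ expType σ) (hK : ∀ i, K i ∈ expType σ) (hSK : ∀ i, S i ^ 2 + K i ^ 2 = 1)
    {h : MvPolynomial σ ℝ} (hh : ∀ x, 0 ≤ eval x h) (s : ℝ) :
    IsSumSqLimit (aeval (fun i ↦ s • (S i * K i)) h) := by
  set c : ℝ := (√2)⁻¹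
  have two_mul_c_sq : 2 * c ^ 2 = 1 := by
    rw [inv_pow, Real.sq_sqrt zero_le_two, mul_inv_cancel₀ two_ne_zero]
  have two_mul_algebraMap_c_sq : 2 * algebraMap ℝ (MvPowerSeries σ ℝ) c ^ 2 = 1 := by
    simpa only [map_mul, map_pow, map_one, map_ofNat] using
      congrArg (algebraMap ℝ (MvPowerSeries σ ℝ)) two_mul_c_sq
  set u : σ → MvPowerSeries σ ℝ := fun i ↦ c • (S i + K i)
  set v : σ → MvPowerSeries σ ℝ := fun i ↦ c • (K i - S i)
  have u_sq_add_v_sq (i : σ) : u i ^ 2 + v i ^ 2 = 1 := by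
    simp only [u, v, Algebra.smul_def]
    linear_combination (S i ^ 2 + K i ^ 2) * two_mul_algebraMap_c_sq + hSK i
  have smul_S_mul_K (i : σ) :
      s • (S i * K i) = algebraMap ℝ _ (s / 2) * (2 * u i ^ 2 - 1) := by
    have s_eq : algebraMap ℝ (MvPowerSeries σ ℝ) s = 2 * algebraMap ℝ _ (s / 2) := by
      rw [← map_ofNat (algebraMap ℝ (MvPowerSeries σ ℝ)) 2, ← map_mul,
        mul_div_cancel₀ s two_ne_zero]
    simp only [u, Algebra.smul_def]
    linear_combination (S i * K i) * s_eq - algebraMap ℝ (MvPowerSeries σ ℝ) (s / 2) *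
      ((S i + K i) ^ 2 * two_mul_algebraMap_c_sq + hSK i)
  have aeval_eq : aeval (fun i ↦ s • (S i * K i)) h =
      aeval (u · ^ 2) (bind₁ (fun i ↦ C (s / 2) * (2 * X i - 1)) h) := by
    rw [aeval_bind₁]
    congr 2
    funext i
    simp [smul_S_mul_K]
  rw [aeval_eq]
  refine isSumSqLimit_aeval_sq (fun i ↦ ?_) (fun i ↦ ?_) u_sq_add_v_sq fun x _ ↦ ?_
  · exact Subalgebra.smul_mem _ (add_mem (hS i) (hK i)) c
  · exact Subalgebra.smul_mem _ (sub_mem (hK i) (hS i)) c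
  · rw [← aeval_eq_eval, aeval_bind₁, aeval_eq_eval]
    exact hh _

theorem sin_eq_X_mul (A : Type*) [CommRing A] [Algebra ℚ A] : PowerSeries.sin A =
    PowerSeries.X * PowerSeries.mk fun k ↦ PowerSeries.coeff (k + 1) (PowerSeries.sin A) := by
  simpa [constantCoeff_sin] using PowerSeries.eq_X_mul_shift_add_const (PowerSeries.sin A)

theorem dominatedTendsto_inv_smul_sin_mul_cos {t : ι → ℝ} (ht : Tendsto t l (𝓝 0))
    (ht_ne : ∀ k, t k ≠ 0) (i : σ) :
    DominatedTendsto (fun k ↦ (t k)⁻¹ • (scaledSubst (t k) i (PowerSeries.sin ℝ) *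
      scaledSubst (t k) i (PowerSeries.cos ℝ))) l (MvPowerSeries.X i) := by
  set sinc : PowerSeries ℝ := .mk fun k ↦ PowerSeries.coeff (k + 1) (PowerSeries.sin ℝ)
  have abs_coeff_sinc_le (k : ℕ) : |PowerSeries.coeff k sinc| ≤ 1 / k ! := by
    rw [PowerSeries.coeff_mk]
    refine (abs_coeff_sin_le (k + 1)).trans ?_
    gcongr
    exact k.le_succ
  have constantCoeff_sinc : PowerSeries.constantCoeff sinc = 1 := by
    simp [sinc, PowerSeries.sin, ← PowerSeries.coeff_zero_eq_constantCoeff_apply]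
  have inv_smul_eq (k : ι) : (t k)⁻¹ • (scaledSubst (t k) i (PowerSeries.sin ℝ) *
      scaledSubst (t k) i (PowerSeries.cos ℝ)) = MvPowerSeries.X i *
        (scaledSubst (t k) i sinc * scaledSubst (t k) i (PowerSeries.cos ℝ)) := by
    rw [sin_eq_X_mul, map_mul, scaledSubst_X, mul_assoc, smul_mul_assoc, smul_smul,
      inv_mul_cancel₀ (ht_ne k), one_smul]
  have X_mem : (MvPowerSeries.X i : MvPowerSeries σ ℝ) ∈ expType σ := by
    rw [← one_smul ℝ (MvPowerSeries.X i), ← scaledSubst_X]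
    refine mem_expType.mpr ⟨_, _, expBound_scaledSubst (fun k ↦ ?_) 1 i⟩
    rw [PowerSeries.coeff_X]
    split_ifs with hk
    · simp [hk]
    · rw [abs_zero]; positivity
  have := (dominatedTendsto_const (l := l) X_mem).mul
    ((dominatedTendsto_scaledSubst abs_coeff_sinc_le ht i).mul
      (dominatedTendsto_scaledSubst abs_coeff_cos_le ht i))
  rw [constantCoeff_sinc, constantCoeff_cos, map_one, mul_one, mul_one] at this
  rwa [funext inv_smul_eq]

theorem aeval_X_eq_coe (h : MvPolynomial σ ℝ) :
    aeval MvPowerSeries.X h = (h : MvPowerSeries σ ℝ) := by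
  have : aeval MvPowerSeries.X = MvPolynomial.coeToMvPowerSeries.algHom (σ := σ) (R := ℝ) ℝ := by
    ext i : 1
    simp
  simp [this]

theorem isSumSqLimit_of_nonneg [Finite σ] {h : MvPolynomial σ ℝ} (hh : ∀ x, 0 ≤ eval x h) :
    IsSumSqLimit (h : MvPowerSeries σ ℝ) := by
  rw [← aeval_X_eq_coe]
  refine .of_tendsto (.of_forall fun m ↦ ?_) (DominatedTendsto.aeval
    (dominatedTendsto_inv_smul_sin_mul_cos tendsto_one_div_add_atTop_nhds_zero_nat
      fun m ↦ by positivity) h).tendsto_weightedNorm_sub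
  refine isSumSqLimit_aeval_smul_mul (fun i ↦ ?_) (fun i ↦ ?_) (fun i ↦ ?_) hh _
  · exact mem_expType.mpr ⟨_, _, expBound_scaledSubst abs_coeff_sin_le _ i⟩
  · exact mem_expType.mpr ⟨_, _, expBound_scaledSubst abs_coeff_cos_le _ i⟩
  · rw [← map_pow, ← map_pow, ← map_add, sin_sq_add_cos_sq, map_one]

end Trigonometric

section SumSqOrder

variable {R : Type*} [CommRing R]

/-- The preorder induced by the cone of sums of squares. -/
def SumSqLE (p q : R) : Prop := IsSumSq (q - p)

theorem isSumSq_sq (p : R) : IsSumSq (p ^ 2) := (IsSquare.sq p).isSumSq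

theorem isSumSq_pow {p : R} (hp : IsSumSq p) (k : ℕ) : IsSumSq (p ^ k) :=
  Subsemiring.mem_sumSq.mp (pow_mem (Subsemiring.mem_sumSq.mpr hp) k)

namespace SumSqLE

variable {p q p' q' s : R}

theorem trans (hpq : SumSqLE p q) (hqs : SumSqLE q s) : SumSqLE p s := by
  simpa only [SumSqLE, sub_add_sub_cancel] using IsSumSq.add hqs hpq

instance : Trans (SumSqLE (R := R)) SumSqLE SumSqLE := ⟨trans⟩

theorem add (h : SumSqLE p q) (h' : SumSqLE p' q') : SumSqLE (p + p') (q + q') := by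
  simpa only [SumSqLE, add_sub_add_comm] using IsSumSq.add h h'

theorem sum {ι : Type*} {t : Finset ι} {f g : ι → R} (h : ∀ i ∈ t, SumSqLE (f i) (g i)) :
    SumSqLE (∑ i ∈ t, f i) (∑ i ∈ t, g i) := by
  simpa only [SumSqLE, Finset.sum_sub_distrib] using IsSumSq.sum h

theorem mul_left (h : SumSqLE p q) (hs : IsSumSq s) : SumSqLE (s * p) (s * q) := by
  simpa only [SumSqLE, mul_sub] using hs.mul h

theorem smul [Algebra ℝ R] (h : SumSqLE p q) {r : ℝ} (hr : 0 ≤ r) : SumSqLE (r • p) (r • q) := by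
  simpa only [SumSqLE, smul_sub] using isSumSq_smul hr h

theorem smul_right [Algebra ℝ R] (hp : IsSumSq p) {r r' : ℝ} (hr : r ≤ r') :
    SumSqLE (r • p) (r' • p) := by
  simpa only [SumSqLE, sub_smul] using isSumSq_smul (sub_nonneg.mpr hr) hp

theorem single {ι : Type*} {t : Finset ι} {f : ι → R} (hf : ∀ i ∈ t, IsSumSq (f i)) {i : ι}
    (hi : i ∈ t) : SumSqLE (f i) (∑ j ∈ t, f j) := by
  classical
  rw [SumSqLE, ← Finset.add_sum_erase t f hi, add_sub_cancel_left]
  exact IsSumSq.sum fun j hj ↦ hf j (Finset.mem_of_mem_erase hj)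

end SumSqLE

theorem isSumSq_pow_sub_pow_mul_pow_sub_pow {y z : R} (hy : IsSumSq y) (hz : IsSumSq z)
    (a b : ℕ) : IsSumSq ((y ^ a - z ^ a) * (y ^ b - z ^ b)) := by
  have geom_sum_isSumSq (k : ℕ) : IsSumSq (∑ i ∈ Finset.range k, y ^ i * z ^ (k - 1 - i)) :=
    IsSumSq.sum fun i _ ↦ (isSumSq_pow hy i).mul (isSumSq_pow hz _)
  rw [← geom_sum₂_mul, ← geom_sum₂_mul, mul_mul_mul_comm]
  exact ((geom_sum_isSumSq a).mul (geom_sum_isSumSq b)).mul (.mul_self _)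

variable [Algebra ℝ R] {σ : Type*} [Fintype σ]

/-- Chebyshev's sum inequality, in the sum-of-squares order. -/
theorem sum_pow_mul_sum_pow_sumSqLE {y : σ → R} (hy : ∀ i, IsSumSq (y i)) (a b : ℕ) :
    SumSqLE ((∑ i, y i ^ a) * ∑ i, y i ^ b) ((Fintype.card σ : ℝ) • ∑ i, y i ^ (a + b)) := by
  have eq_half_smul : (Fintype.card σ : ℝ) • ∑ i, y i ^ (a + b) - (∑ i, y i ^ a) * ∑ i, y i ^ b =
      (1 / 2 : ℝ) • ∑ i, ∑ j, (y i ^ a - y j ^ a) * (y i ^ b - y j ^ b) := by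
    rw [eq_comm, one_div, inv_smul_eq_iff₀ two_ne_zero, ofNat_smul_eq_nsmul, Nat.cast_smul_eq_nsmul]
    simp only [sub_mul, mul_sub, Finset.sum_sub_distrib, ← Finset.mul_sum, ← Finset.sum_mul,
      Finset.sum_const, Finset.card_univ, nsmul_eq_mul, ← pow_add]
    push_cast
    ring
  rw [SumSqLE, eq_half_smul]
  exact isSumSq_smul (by norm_num) <| IsSumSq.sum fun i _ ↦ IsSumSq.sum fun j _ ↦
    isSumSq_pow_sub_pow_mul_pow_sub_pow (hy i) (hy j) a b

theorem prod_pow_sumSqLE [Nonempty σ] {y : σ → R} (hy : ∀ i, IsSumSq (y i)) (β : σ → ℕ)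
    (s : Finset σ) :
    SumSqLE (∏ i ∈ s, y i ^ β i) ((Fintype.card σ ^ s.card : ℝ) • ∑ i, y i ^ ∑ j ∈ s, β j) := by
  classical
  induction s using Finset.induction with
  | empty =>
    obtain ⟨i⟩ := ‹Nonempty σ›
    have := SumSqLE.single (f := fun j ↦ y j ^ 0) (fun j _ ↦ isSumSq_pow (hy j) 0)
      (Finset.mem_univ i)
    simpa using this
  | insert i s hi ih =>
    have pow_sumSqLE : SumSqLE (y i ^ β i) (∑ j, y j ^ β i) :=
      .single (fun j _ ↦ isSumSq_pow (hy j) _) (Finset.mem_univ i)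
    have sum_isSumSq : IsSumSq (∑ j, y j ^ ∑ j ∈ s, β j) :=
      IsSumSq.sum fun j _ ↦ isSumSq_pow (hy j) _
    rw [Finset.prod_insert hi, Finset.sum_insert hi, Finset.card_insert_of_notMem hi]
    calc SumSqLE (y i ^ β i * ∏ j ∈ s, y j ^ β j)
          (y i ^ β i * ((Fintype.card σ ^ s.card : ℝ) • ∑ j, y j ^ ∑ j ∈ s, β j)) :=
        ih.mul_left (isSumSq_pow (hy i) _)
      SumSqLE _ ((Fintype.card σ ^ s.card : ℝ) •
          ((∑ j, y j ^ ∑ j ∈ s, β j) * ∑ j, y j ^ β i)) := by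
        rw [mul_smul_comm, mul_comm]
        exact (pow_sumSqLE.mul_left sum_isSumSq).smul (by positivity)
      SumSqLE _ ((Fintype.card σ ^ s.card : ℝ) •
          (Fintype.card σ : ℝ) • ∑ j, y j ^ (∑ j ∈ s, β j + β i)) :=
        (sum_pow_mul_sum_pow_sumSqLE hy _ _).smul (by positivity)
      _ = _ := by rw [smul_smul, pow_succ, add_comm]

end SumSqOrder

section Theta

open scoped Nat ENNReal

theorem theta_eq_sum_smul (n r : ℕ) : theta n r =
    ∑ k ∈ Finset.range (r + 1), (1 / k ! : ℝ) • ∑ i : Fin n, (X i ^ 2) ^ k := by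
  simp only [theta, Finset.smul_sum, ← C_mul', pow_mul]

theorem isSumSq_smul_sum_X_sq_pow {σ : Type*} [Fintype σ] {c : ℝ} (hc : 0 ≤ c) (k : ℕ) :
    IsSumSq (c • ∑ i : σ, (X i ^ 2 : MvPolynomial σ ℝ) ^ k) :=
  isSumSq_smul hc <| IsSumSq.sum fun i _ ↦ isSumSq_pow (isSumSq_sq (X i)) k

theorem isSumSq_theta (n r : ℕ) : IsSumSq (theta n r) := by
  rw [theta_eq_sum_smul]
  exact IsSumSq.sum fun k _ ↦ isSumSq_smul_sum_X_sq_pow (by positivity) k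

theorem theta_sumSqLE_theta (n : ℕ) {r s : ℕ} (hrs : r ≤ s) :
    SumSqLE (theta n r) (theta n s) := by
  rw [SumSqLE, theta_eq_sum_smul, theta_eq_sum_smul,
    ← Finset.sum_range_add_sum_Ico _ (Nat.succ_le_succ hrs), add_sub_cancel_left]
  exact IsSumSq.sum fun k _ ↦ isSumSq_smul_sum_X_sq_pow (by positivity) k

theorem sum_X_sq_pow_sumSqLE_smul_theta (n : ℕ) {k r : ℕ} (hk : k ≤ r) :
    SumSqLE (∑ i : Fin n, (X i ^ 2) ^ k) ((k ! : ℝ) • theta n r) := by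
  have := SumSqLE.single (t := Finset.range (r + 1))
    (f := fun k ↦ (1 / k ! : ℝ) • ∑ i : Fin n, (X i ^ 2 : MvPolynomial (Fin n) ℝ) ^ k)
    (fun k _ ↦ isSumSq_smul_sum_X_sq_pow (by positivity) k) (Finset.mem_range_succ_iff.mpr hk)
  rw [← theta_eq_sum_smul] at this
  simpa [smul_smul, mul_inv_cancel₀, Nat.factorial_ne_zero] using
    this.smul (Nat.cast_nonneg (α := ℝ) k !)

theorem totalDegree_theta_le (n r : ℕ) : (theta n r).totalDegree ≤ 2 * r := by
  refine totalDegree_finsetSum_le fun k hk ↦ totalDegree_finsetSum_le fun i _ ↦ ?_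
  calc (C (1 / k ! : ℝ) * X i ^ (2 * k)).totalDegree
      ≤ (C (1 / k ! : ℝ)).totalDegree + (X i ^ (2 * k) : MvPolynomial (Fin n) ℝ).totalDegree :=
        totalDegree_mul _ _
    _ = 2 * k := by rw [totalDegree_C, totalDegree_X_pow, zero_add]
    _ ≤ 2 * r := by grind

theorem eval_theta {n : ℕ} (r : ℕ) (x : Fin n → ℝ) : eval x (theta n r) =
    ∑ k ∈ Finset.range (r + 1), ∑ i, (x i ^ 2) ^ k / k ! := by
  simp [theta, pow_mul, div_eq_inv_mul]

theorem monomial_sq_sumSqLE_smul_theta {n r : ℕ} [NeZero n] {β : Fin n →₀ ℕ}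
    (hβ : β.degree ≤ r) :
    SumSqLE (monomial β (1 : ℝ) ^ 2) ((n ^ n * β.degree ! : ℝ) • theta n r) := by
  have monomial_sq : monomial β (1 : ℝ) ^ 2 = ∏ i, (X i ^ 2 : MvPolynomial (Fin n) ℝ) ^ β i := by
    rw [monomial_eq, C_1, one_mul, Finsupp.prod_fintype _ _ fun i ↦ pow_zero _, ← Finset.prod_pow]
    simp only [← pow_mul, mul_comm]
  have prod_le := prod_pow_sumSqLE (fun i ↦ isSumSq_sq (X i : MvPolynomial (Fin n) ℝ)) β
    Finset.univ
  rw [← monomial_sq, Finset.card_univ, Fintype.card_fin, ← Finsupp.degree_eq_sum] at prod_le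
  rw [mul_smul]
  exact prod_le.trans ((sum_X_sq_pow_sumSqLE_smul_theta n hβ).smul (by positivity))

theorem smul_mul_sumSqLE {R : Type*} [CommRing R] [Algebra ℝ R] (c : ℝ) (p q : R) :
    SumSqLE (c • (p * q)) ((|c| / 2) • (p ^ 2 + q ^ 2)) := by
  rw [SumSqLE]
  obtain ⟨k, rfl⟩ : ∃ k, c = 2 * k := ⟨c / 2, by ring⟩
  obtain hk | hk := abs_cases (2 * k) <;> rw [hk.1]
  · convert isSumSq_smul (by linarith : 0 ≤ k) (isSumSq_sq (p - q)) using 1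
    simp only [Algebra.smul_def, mul_div_cancel_left₀ k two_ne_zero, map_mul, map_ofNat]
    ring
  · convert isSumSq_smul (by linarith : 0 ≤ -k) (isSumSq_sq (p + q)) using 1
    simp only [Algebra.smul_def, neg_div, mul_div_cancel_left₀ k two_ne_zero, map_neg, map_mul,
      map_ofNat]
    ring

theorem monomial_sumSqLE_smul_theta {n r : ℕ} [NeZero n] {α : Fin n →₀ ℕ}
    (hα : α.degree ≤ 2 * r) (c : ℝ) :
    SumSqLE (monomial α c) ((n ^ n * (|c| * ((α.degree + 1) / 2)!) : ℝ) • theta n r) := by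
  obtain ⟨β, hβα, hβ⟩ := Finsupp.exists_le_degree_eq α (α.degree / 2) (Nat.div_le_self _ _)
  obtain ⟨γ, rfl⟩ := exists_add_of_le hβα
  set w := ((β + γ).degree + 1) / 2
  have degree_add := map_add Finsupp.degree β γ
  have sq_sumSqLE {δ : Fin n →₀ ℕ} (hδ : δ.degree ≤ w) :
      SumSqLE (monomial δ (1 : ℝ) ^ 2) ((n ^ n * w ! : ℝ) • theta n r) :=
    (monomial_sq_sumSqLE_smul_theta (by grind)).trans
      (.smul_right (isSumSq_theta n r) (by gcongr))
  calc SumSqLE (monomial (β + γ) c)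
        ((|c| / 2) • (monomial β (1 : ℝ) ^ 2 + monomial γ 1 ^ 2)) := by
        have := smul_mul_sumSqLE c (monomial β (1 : ℝ)) (monomial γ 1)
        rwa [monomial_mul, smul_monomial, mul_one, smul_eq_mul, mul_one] at this
    SumSqLE _ ((|c| / 2) • ((n ^ n * w ! : ℝ) • theta n r + (n ^ n * w ! : ℝ) • theta n r)) :=
        ((sq_sumSqLE (by grind)).add (sq_sumSqLE (by grind))).smul (by positivity)
    _ = _ := by module

theorem sumSqLE_smul_theta {n r : ℕ} [NeZero n] {e : MvPolynomial (Fin n) ℝ}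
    (he : e.totalDegree ≤ 2 * r) {η : ℝ}
    (hη : n ^ n * weightedNorm (e : MvPowerSeries (Fin n) ℝ) ≤ ENNReal.ofReal η) (hη₀ : 0 ≤ η) :
    SumSqLE e (η • theta n r) := by
  have weightedNorm_coe : weightedNorm (e : MvPowerSeries (Fin n) ℝ) =
      ENNReal.ofReal (∑ α ∈ e.support, |coeff α e| * ((α.degree + 1) / 2)!) := by
    rw [weightedNorm, tsum_eq_sum (s := e.support) fun α hα ↦ by
        rw [coeff_coe, notMem_support_iff.mp hα, enorm_zero, zero_mul],
      ENNReal.ofReal_sum_of_nonneg fun α _ ↦ by positivity]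
    refine Finset.sum_congr rfl fun α _ ↦ ?_
    rw [coeff_coe, Real.enorm_eq_ofReal_abs, ENNReal.ofReal_mul (abs_nonneg _),
      ENNReal.ofReal_natCast]
  calc SumSqLE e (∑ α ∈ e.support,
          (n ^ n * (|coeff α e| * ((α.degree + 1) / 2)!) : ℝ) • theta n r) := by
        conv_lhs => rw [e.as_sum]
        refine SumSqLE.sum fun α hα ↦ monomial_sumSqLE_smul_theta ?_ _
        exact (le_totalDegree hα).trans he
    SumSqLE _ (η • theta n r) := by
        rw [← Finset.sum_smul, ← Finset.mul_sum]
        refine .smul_right (isSumSq_theta n r) ?_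
        rwa [weightedNorm_coe, ← ENNReal.ofReal_natCast n, ← ENNReal.ofReal_pow n.cast_nonneg,
          ← ENNReal.ofReal_mul (by positivity), ENNReal.ofReal_le_ofReal_iff hη₀] at hη

theorem exists_forall_isSumSq_add_smul_theta {n : ℕ} [NeZero n] {h : MvPolynomial (Fin n) ℝ}
    (hh : ∀ x, 0 ≤ eval x h) {ε : ℝ} (hε : 0 < ε) :
    ∃ r₀, ∀ r ≥ r₀, IsSumSq (h + ε • theta n r) := by
  have hn : (n ^ n : ℝ≥0∞) ≠ 0 := pow_ne_zero _ <| Nat.cast_ne_zero.mpr (NeZero.ne n)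
  have hn' : (n ^ n : ℝ≥0∞) ≠ ⊤ := ENNReal.pow_ne_top (ENNReal.natCast_ne_top n)
  obtain ⟨s, hs, hsh⟩ := isSumSqLimit_of_nonneg hh (ENNReal.ofReal ε / n ^ n)
    (ENNReal.div_pos (ENNReal.ofReal_pos.mpr hε).ne' hn')
  have coe_sub : ((s - h : MvPolynomial (Fin n) ℝ) : MvPowerSeries (Fin n) ℝ) = s - h :=
    map_sub coeToMvPowerSeries.ringHom s h
  rw [← coe_sub, ENNReal.lt_div_iff_mul_lt (.inl hn) (.inl hn'), mul_comm] at hsh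
  refine ⟨(s - h).totalDegree, fun r hr ↦ ?_⟩
  have isSumSq_sub : IsSumSq (ε • theta n r - (s - h)) :=
    sumSqLE_smul_theta (by omega) hsh.le hε.le
  simpa only [add_sub_left_comm, sub_sub_cancel, add_comm h] using hs.add isSumSq_sub

end Theta

section Penalty

open scoped Nat

theorem exists_forall_nonneg_add_mul {X : Type*} [TopologicalSpace X] {u v : X → ℝ}
    (hu : Continuous u) (hv : Continuous v) (hv₀ : ∀ x, 0 ≤ v x)
    (hcompact : IsCompact {x | u x ≤ 0}) (hpos : ∀ x, v x = 0 → 0 < u x) :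
    ∃ M ≥ 0, ∀ x, 0 ≤ u x + M * v x := by
  have v_pos : ∀ x ∈ {x | u x ≤ 0}, 0 < v x := fun x hx ↦
    (hv₀ x).lt_of_ne' fun h ↦ (hpos x h).not_ge hx
  have quotient_continuousOn : ContinuousOn (fun x ↦ -u x / v x) {x | u x ≤ 0} :=
    hu.neg.continuousOn.div hv.continuousOn fun x hx ↦ (v_pos x hx).ne'
  obtain ⟨M, hM⟩ := hcompact.bddAbove_image quotient_continuousOn
  refine ⟨max M 0, le_max_right _ _, fun x ↦ ?_⟩
  obtain hx | hx := le_or_gt (u x) 0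
  · have : -u x / v x ≤ max M 0 := le_max_of_le_left (hM ⟨x, hx, rfl⟩)
    rw [div_le_iff₀ (v_pos x hx)] at this
    linarith
  · exact add_nonneg hx.le (mul_nonneg (le_max_right _ _) (hv₀ x))

theorem exists_forall_abs_eval_le {σ : Type*} [Fintype σ] (p : MvPolynomial σ ℝ) :
    ∃ K : ℝ, ∀ x : σ → ℝ, |eval x p| ≤ K * max 1 ‖x‖ ^ p.totalDegree := by
  refine ⟨∑ α ∈ p.support, |coeff α p|, fun x ↦ ?_⟩
  rw [eval_eq', Finset.sum_mul]
  refine (Finset.abs_sum_le_sum_abs _ _).trans (Finset.sum_le_sum fun α hα ↦ ?_)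
  rw [abs_mul]
  gcongr
  calc |∏ i, x i ^ α i| ≤ ∏ i, max 1 ‖x‖ ^ α i := by
        rw [Finset.abs_prod]
        gcongr with i
        rw [abs_pow]
        gcongr
        exact (norm_le_pi_norm x i).trans (le_max_right _ _)
    _ = max 1 ‖x‖ ^ α.degree := by rw [Finset.prod_pow_eq_pow_sum, Finsupp.degree_eq_sum]
    _ ≤ max 1 ‖x‖ ^ p.totalDegree := pow_le_pow_right₀ (le_max_left _ _) (le_totalDegree hα)

theorem pow_div_factorial_le_eval_theta {n k r : ℕ} (hk : k ≤ r) (x : Fin n → ℝ) (i : Fin n) :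
    (x i ^ 2) ^ k / k ! ≤ eval x (theta n r) := by
  have term_nonneg (k : ℕ) (i : Fin n) : 0 ≤ (x i ^ 2) ^ k / k ! := by positivity
  rw [eval_theta]
  exact (Finset.single_le_sum (fun i _ ↦ term_nonneg k i) (Finset.mem_univ i)).trans <|
    Finset.single_le_sum (f := fun k ↦ ∑ i, (x i ^ 2) ^ k / k !)
      (fun k _ ↦ Finset.sum_nonneg fun i _ ↦ term_nonneg k i) (Finset.mem_range_succ_iff.mpr hk)

theorem max_one_norm_pow_div_factorial_le_eval_theta {n : ℕ} [NeZero n] (r : ℕ)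
    (x : Fin n → ℝ) : max 1 ‖x‖ ^ (2 * r) / r ! ≤ eval x (theta n r) := by
  obtain h | h := max_cases 1 ‖x‖ <;> rw [h.1]
  · calc (1 : ℝ) ^ (2 * r) / r ! ≤ (x 0 ^ 2) ^ 0 / 0 ! := by
          rw [one_pow, pow_zero, Nat.factorial_zero, Nat.cast_one]
          gcongr
          exact_mod_cast r.factorial_pos
      _ ≤ eval x (theta n r) := pow_div_factorial_le_eval_theta r.zero_le x 0
  · obtain ⟨i, -, hi⟩ := Finset.exists_mem_eq_sup Finset.univ Finset.univ_nonempty (‖x ·‖₊)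
    have norm_eq : ‖x‖ = ‖x i‖ := congrArg NNReal.toReal hi
    rw [norm_eq, pow_mul, Real.norm_eq_abs, sq_abs]
    exact pow_div_factorial_le_eval_theta le_rfl x i

theorem isCompact_setOf_eval_add_mul_eval_theta_le {n : ℕ} [NeZero n]
    (p : MvPolynomial (Fin n) ℝ) {δ : ℝ} (hδ : 0 < δ) {r : ℕ} (hr : p.totalDegree < 2 * r) :
    IsCompact {x : Fin n → ℝ | eval x p + δ * eval x (theta n r) ≤ 0} := by
  obtain ⟨K, hK⟩ := exists_forall_abs_eval_le p
  refine Metric.isCompact_of_isClosed_isBounded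
    (isClosed_le ((continuous_eval p).add ((continuous_eval _).const_mul δ)) continuous_const) ?_
  refine isBounded_iff_forall_norm_le.mpr ⟨K * (r ! / δ), fun x hx ↦ ?_⟩
  set ρ := max 1 ‖x‖
  have hρ : 1 ≤ ρ := le_max_left _ _
  have pow_succ_le : δ * (ρ ^ p.totalDegree * ρ / r !) ≤ K * ρ ^ p.totalDegree :=
    calc δ * (ρ ^ p.totalDegree * ρ / r !) ≤ δ * (ρ ^ (2 * r) / r !) := by
          rw [← pow_succ]
          gcongr
          exact hr
      _ ≤ δ * eval x (theta n r) := by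
          gcongr
          exact max_one_norm_pow_div_factorial_le_eval_theta r x
      _ ≤ |eval x p| := by linarith [hx.out, neg_abs_le (eval x p)]
      _ ≤ K * ρ ^ p.totalDegree := hK x
  have pow_pos : 0 < ρ ^ p.totalDegree := by positivity
  calc ‖x‖ ≤ ρ := le_max_right _ _
    _ ≤ K * (r ! / δ) := by
      rw [← mul_div_assoc, le_div_iff₀ hδ]
      refine le_of_mul_le_mul_right ?_ pow_pos
      field_simp at pow_succ_le ⊢
      linarith

theorem exists_forall_isSumSq_add_smul_theta_add_smul_sum_sq {n m : ℕ} [NeZero n]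
    {f : MvPolynomial (Fin n) ℝ} {g : Fin m → MvPolynomial (Fin n) ℝ}
    (hf : ∀ x, (∀ j, eval x (g j) = 0) → 0 ≤ eval x f) {ε : ℝ} (hε : 0 < ε) :
    ∃ M ≥ (0 : ℝ), ∃ r₀, ∀ r ≥ r₀, IsSumSq (f + ε • theta n r + M • ∑ j, g j ^ 2) := by
  set d := f.totalDegree + 1
  have theta_pos (x : Fin n → ℝ) : 0 < eval x (theta n d) :=
    lt_of_lt_of_le (by positivity) (max_one_norm_pow_div_factorial_le_eval_theta d x)
  obtain ⟨M, hM, nonneg⟩ := exists_forall_nonneg_add_mul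
    (u := fun x ↦ eval x f + ε / 2 * eval x (theta n d)) (v := fun x ↦ ∑ j, eval x (g j) ^ 2)
    ((continuous_eval f).add ((continuous_eval _).const_mul (ε / 2)))
    (continuous_finsetSum _ fun j _ ↦ (continuous_eval (g j)).pow 2) (fun x ↦ by positivity)
    (isCompact_setOf_eval_add_mul_eval_theta_le f (half_pos hε) (by omega)) fun x hx ↦ by
      have := hf x fun j ↦ by
        simpa using (Finset.sum_eq_zero_iff_of_nonneg fun j _ ↦ sq_nonneg (eval x (g j))).mp hx j
      have := theta_pos x
      positivity
  obtain ⟨r₀, hr₀⟩ := exists_forall_isSumSq_add_smul_theta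
    (h := f + (ε / 2) • theta n d + M • ∑ j, g j ^ 2)
    (fun x ↦ by simpa [smul_eval] using nonneg x) (half_pos hε)
  refine ⟨M, hM, max r₀ d, fun r hr ↦ ?_⟩
  have eq_add : f + ε • theta n r + M • ∑ j, g j ^ 2 =
      f + (ε / 2) • theta n d + M • ∑ j, g j ^ 2 + (ε / 2) • theta n r +
        ((ε / 2) • theta n r - (ε / 2) • theta n d) := by module
  rw [eq_add]
  exact (hr₀ r (le_of_max_le_left hr)).add
    ((theta_sumSqLE_theta n (le_of_max_le_right hr)).smul (half_pos hε).le)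

end Penalty

section Duality

/-- `Ly` as a linear functional. -/
noncomputable def rieszFunctional {n : ℕ} (y : (Fin n →₀ ℕ) → ℝ) :
    MvPolynomial (Fin n) ℝ →ₗ[ℝ] ℝ :=
  (basisMonomials (Fin n) ℝ).constr ℝ y

theorem Ly_eq_rieszFunctional {n : ℕ} (y : (Fin n →₀ ℕ) → ℝ) (p : MvPolynomial (Fin n) ℝ) :
    Ly y p = rieszFunctional y p :=
  ((basisMonomials (Fin n) ℝ).constr_apply ℝ y p).symm

theorem rieszFunctional_monomial {n : ℕ} (y : (Fin n →₀ ℕ) → ℝ) (α : Fin n →₀ ℕ) (c : ℝ) :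
    rieszFunctional y (monomial α c) = c * y α := by
  have monomial_eq_smul : monomial α c = c • basisMonomials (Fin n) ℝ α := by
    rw [coe_basisMonomials, smul_monomial, smul_eq_mul, mul_one]
  rw [monomial_eq_smul, map_smul, rieszFunctional, Module.Basis.constr_basis, smul_eq_mul]

theorem mem_degLE {n r : ℕ} {α : Fin n →₀ ℕ} : α ∈ degLE n r ↔ α.degree ≤ r := by
  rw [degLE, Finset.mem_filter]
  exact and_iff_right_of_imp fun h ↦ Finset.mem_Iic.mpr fun i ↦ (Finsupp.le_degree i α).trans h

theorem rieszFunctional_sq_nonneg {n r : ℕ} {y : (Fin n →₀ ℕ) → ℝ}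
    (hy : (momentMatrix n r y).PosSemidef) {q : MvPolynomial (Fin n) ℝ}
    (hq : q.totalDegree ≤ r) : 0 ≤ rieszFunctional y (q ^ 2) := by
  have eq_sum : q = ∑ α : degLE n r, monomial α.1 (coeff α.1 q) := by
    rw [Finset.sum_coe_sort (degLE n r) fun α ↦ monomial α (coeff α q)]
    conv_lhs => rw [q.as_sum]
    refine Finset.sum_subset (fun α hα ↦ mem_degLE.mpr ((le_totalDegree hα).trans hq))
      fun α _ hα ↦ ?_
    rw [notMem_support_iff.mp hα, monomial_zero]
  refine (hy.dotProduct_mulVec_nonneg fun α ↦ coeff α.1 q).trans_eq ?_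
  conv_rhs => rw [eq_sum, sq, Finset.sum_mul_sum]
  simp only [map_sum, monomial_mul, rieszFunctional_monomial, dotProduct, Matrix.mulVec,
    momentMatrix, Finset.mul_sum, Pi.star_apply, star_trivial, mul_left_comm, mul_comm]

theorem homogeneousComponent_mul_of_totalDegree_le {σ R : Type*} [CommSemiring R]
    {p q : MvPolynomial σ R} {a b : ℕ} (hp : p.totalDegree ≤ a) (hq : q.totalDegree ≤ b) :
    homogeneousComponent (a + b) (p * q) =
      homogeneousComponent a p * homogeneousComponent b q := by
  classical
  have coeff_eq_zero {p : MvPolynomial σ R} {a : ℕ} {α : σ →₀ ℕ} (hp : p.totalDegree ≤ a)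
      (hα : a < α.degree) : coeff α p = 0 := coeff_eq_zero_of_totalDegree_lt (hp.trans_lt hα)
  ext α
  rw [coeff_homogeneousComponent]
  split_ifs with hα
  · rw [coeff_mul, coeff_mul]
    refine Finset.sum_congr rfl fun βγ h ↦ ?_
    rw [Finset.HasAntidiagonal.mem_antidiagonal] at h
    have degree_add : βγ.1.degree + βγ.2.degree = a + b := by rw [← map_add, h, hα]
    rw [coeff_homogeneousComponent, coeff_homogeneousComponent]
    obtain hβ | hβ | hβ := lt_trichotomy βγ.1.degree a
    · rw [coeff_eq_zero hq (by omega), mul_zero, ite_self, mul_zero]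
    · rw [if_pos hβ, if_pos (by omega)]
    · rw [coeff_eq_zero hp hβ, zero_mul, ite_self, zero_mul]
  · exact (((homogeneousComponent_isHomogeneous a p).mul
      (homogeneousComponent_isHomogeneous b q)).coeff_eq_zero hα).symm

theorem eq_zero_of_sum_sq_eq_zero {σ ι : Type*} [Fintype ι]
    {p : ι → MvPolynomial σ ℝ} (hp : ∑ i, p i ^ 2 = 0) (i : ι) : p i = 0 := by
  refine MvPolynomial.funext fun x ↦ ?_
  have := congrArg (eval x) hp
  simp only [map_sum, map_pow, map_zero] at this
  rw [map_zero, ← sq_eq_zero_iff]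
  exact (Finset.sum_eq_zero_iff_of_nonneg fun i _ ↦ sq_nonneg (eval x (p i))).mp this i
    (Finset.mem_univ i)

theorem totalDegree_le_of_totalDegree_sum_sq_le {σ ι : Type*} [Fintype ι]
    {q : ι → MvPolynomial σ ℝ} {r : ℕ} (hq : (∑ i, q i ^ 2).totalDegree ≤ 2 * r) (i : ι) :
    (q i).totalDegree ≤ r := by
  obtain ⟨k, -, hk⟩ := Finset.univ.exists_max_image (fun i ↦ (q i).totalDegree)
    ⟨i, Finset.mem_univ i⟩
  refine (hk i (Finset.mem_univ i)).trans ?_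
  by_contra! hr
  set d := (q k).totalDegree
  -- No cancellation can occur among the leading forms of a sum of squares.
  have sum_sq_leading_eq_zero : ∑ i, homogeneousComponent d (q i) ^ 2 = 0 :=
    calc ∑ i, homogeneousComponent d (q i) ^ 2 = homogeneousComponent (d + d) (∑ i, q i ^ 2) := by
          simp only [map_sum, sq]
          exact Finset.sum_congr rfl fun i hi ↦
            (homogeneousComponent_mul_of_totalDegree_le (hk i hi) (hk i hi)).symm
      _ = 0 := homogeneousComponent_eq_zero _ _ (by omega)
  obtain ⟨α, hα, (hαd : d = α.degree)⟩ := Finset.exists_mem_eq_sup (q k).support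
    (support_nonempty.mpr fun h ↦ by simp [d, h] at hr) Finsupp.degree
  have leading_eq_zero := eq_zero_of_sum_sq_eq_zero sum_sq_leading_eq_zero k
  have := congrArg (coeff α) leading_eq_zero
  rw [coeff_homogeneousComponent, if_pos hαd.symm, coeff_zero] at this
  exact mem_support_iff.mp hα this

theorem rieszFunctional_nonneg_of_isSOS {n r : ℕ} {y : (Fin n →₀ ℕ) → ℝ}
    (hy : (momentMatrix n r y).PosSemidef) {q : MvPolynomial (Fin n) ℝ} (hq : IsSOS q)
    (hqr : q.totalDegree ≤ 2 * r) : 0 ≤ rieszFunctional y q := by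
  obtain ⟨k, p, rfl⟩ := hq
  rw [map_sum]
  exact Finset.sum_nonneg fun i _ ↦
    rieszFunctional_sq_nonneg hy (totalDegree_le_of_totalDegree_sum_sq_le hqr i)

theorem isSOS_of_isSumSq {n : ℕ} {p : MvPolynomial (Fin n) ℝ} (hp : IsSumSq p) : IsSOS p := by
  induction hp with
  | zero => exact ⟨0, Fin.elim0, by simp⟩
  | sq_add a _ ih =>
    obtain ⟨k, q, rfl⟩ := ih
    exact ⟨k + 1, Fin.cons a q, by simp [Fin.sum_univ_succ, sq]⟩

end Duality

section Feasibility

variable (n m : ℕ) (g : Fin m → MvPolynomial (Fin n) ℝ) (f : MvPolynomial (Fin n) ℝ) (ε : ℝ)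
  (r : ℕ)

/-- The objective values of the feasible points of the relaxation `𝒬_{εr}`, so that `infQ` is the
infimum of this set. -/
def primalValues : Set ℝ :=
  {v | ∃ y : (Fin n →₀ ℕ) → ℝ, y 0 = 1 ∧ (momentMatrix n r y).PosSemidef ∧
    (∀ j, Ly y ((g j) ^ 2) ≤ 0) ∧ v = Ly y (f + C ε * theta n r)}

/-- The objective values of the feasible points of the dual `𝒬*_{εr}`, so that `supQdual` is the
supremum of this set. -/
def dualValues : Set ℝ :=
  {v | ∃ (γ : ℝ) (lam : Fin m → ℝ) (q : MvPolynomial (Fin n) ℝ),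
    (∀ j, 0 ≤ lam j) ∧ IsSOS q ∧ q.totalDegree ≤ 2 * r ∧
    f + C ε * theta n r - C γ = q - ∑ j, C (lam j) * g j ^ 2 ∧ v = γ}

variable {n m g f ε r}

theorem le_of_mem_dualValues_of_mem_primalValues {v w : ℝ} (hv : v ∈ dualValues n m g f ε r)
    (hw : w ∈ primalValues n m g f ε r) : v ≤ w := by
  obtain ⟨γ, lam, q, hlam, hq, hqr, hγ, rfl⟩ := hv
  obtain ⟨y, hy₀, hy, hyg, rfl⟩ := hw
  have L_C : rieszFunctional y (C v) = v := by
    rw [C_apply, rieszFunctional_monomial, hy₀, mul_one]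
  have L_penalty_nonpos : rieszFunctional y (∑ j, C (lam j) * g j ^ 2) ≤ 0 := by
    rw [map_sum]
    refine Finset.sum_nonpos fun j _ ↦ ?_
    rw [C_mul', map_smul, ← Ly_eq_rieszFunctional]
    exact mul_nonpos_of_nonneg_of_nonpos (hlam j) (hyg j)
  have L_identity := congrArg (rieszFunctional y) hγ
  rw [map_sub, map_sub, L_C] at L_identity
  rw [Ly_eq_rieszFunctional]
  linarith [rieszFunctional_nonneg_of_isSOS hy hq hqr]

theorem mem_primalValues_of_eval_eq_zero {x : Fin n → ℝ} (hx : ∀ j, eval x (g j) = 0) :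
    eval x f + ε * eval x (theta n r) ∈ primalValues n m g f ε r := by
  -- The moments of the Dirac measure at `x`.
  set y : (Fin n →₀ ℕ) → ℝ := fun α ↦ ∏ i, x i ^ α i
  have Ly_eq_eval (p : MvPolynomial (Fin n) ℝ) : Ly y p = eval x p := (eval_eq' x p).symm
  have momentMatrix_eq : momentMatrix n r y =
      Matrix.vecMulVec (fun α ↦ y α.1) (star fun α ↦ y α.1) := by
    ext α β
    simp [momentMatrix, Matrix.vecMulVec_apply, y, pow_add, Finset.prod_mul_distrib]
  refine ⟨y, by simp [y], ?_, fun j ↦ ?_, ?_⟩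
  · rw [momentMatrix_eq]
    exact Matrix.posSemidef_vecMulVec_self_star _
  · rw [Ly_eq_eval, map_pow, hx j, zero_pow two_ne_zero]
  · rw [Ly_eq_eval, map_add, map_mul, eval_C]

theorem mem_dualValues_of_isSumSq {γ M : ℝ} (hM : 0 ≤ M)
    (h : IsSumSq (f - C γ + ε • theta n r + M • ∑ j, g j ^ 2)) (hf : f.totalDegree ≤ 2 * r)
    (hg : ∀ j, (g j ^ 2).totalDegree ≤ 2 * r) : γ ∈ dualValues n m g f ε r := by
  refine ⟨γ, fun _ ↦ M, _, fun _ ↦ hM, isSOS_of_isSumSq h, ?_, ?_, rfl⟩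
  · have degree_sub : (f - C γ).totalDegree ≤ 2 * r :=
      (totalDegree_sub_C_le f γ).trans hf
    have degree_theta : (ε • theta n r).totalDegree ≤ 2 * r :=
      (totalDegree_smul_le _ _).trans (totalDegree_theta_le n r)
    have degree_sum : (M • ∑ j, g j ^ 2).totalDegree ≤ 2 * r :=
      (totalDegree_smul_le _ _).trans (totalDegree_finsetSum_le fun j _ ↦ hg j)
    exact (totalDegree_add _ _).trans <| max_le
      ((totalDegree_add _ _).trans (max_le degree_sub degree_theta)) degree_sum
  · rw [← Finset.mul_sum, C_mul', C_mul']
    ring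

theorem exists_forall_mem_dualValues {x₀ : Fin n → ℝ}
    (hmin : ∀ x, (∀ j, eval x (g j) = 0) → eval x₀ f ≤ eval x f) (hε : 0 < ε) :
    ∃ r₀, ∀ r ≥ r₀, f.totalDegree ≤ 2 * r → (∀ j, (g j ^ 2).totalDegree ≤ 2 * r) →
      eval x₀ f ∈ dualValues n m g f ε r := by
  obtain rfl | hn := eq_zero_or_neZero n
  · have sub_eq_zero : f - C (eval x₀ f) = 0 := MvPolynomial.funext fun x ↦ by
      rw [Subsingleton.elim x x₀, map_sub, eval_C, sub_self, map_zero]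
    refine ⟨0, fun r _ ↦ mem_dualValues_of_isSumSq le_rfl ?_⟩
    rw [sub_eq_zero, zero_add, zero_smul, add_zero]
    exact isSumSq_smul hε.le (isSumSq_theta 0 r)
  · obtain ⟨M, hM, r₀, hr₀⟩ := exists_forall_isSumSq_add_smul_theta_add_smul_sum_sq
      (f := f - C (eval x₀ f)) (fun x hx ↦ by simpa using hmin x hx) hε
    exact ⟨r₀, fun r hr ↦ mem_dualValues_of_isSumSq hM (hr₀ r hr)⟩

theorem eval_theta_le_sum_exp (r : ℕ) (x : Fin n → ℝ) :
    eval x (theta n r) ≤ ∑ i, Real.exp (x i ^ 2) := by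
  rw [eval_theta, Finset.sum_comm]
  gcongr with i
  exact Real.sum_le_exp_of_nonneg (sq_nonneg (x i)) (r + 1)

end Feasibility

theorem SDP_relaxation_bounds (n m : ℕ) (g : Fin m → MvPolynomial (Fin n) ℝ)
    (f : MvPolynomial (Fin n) ℝ)
    (xstar : Fin n → ℝ) (hxV : ∀ j, eval xstar (g j) = 0)
    (hmin : ∀ x : Fin n → ℝ, (∀ j, eval x (g j) = 0) → eval xstar f ≤ eval x f)
    (fstar : ℝ) (hfstar : fstar = eval xstar f)
    (ε : ℝ) (hε : 0 < ε) :
    ∃ r₀ : ℕ, ∀ r : ℕ, r₀ ≤ r →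
      f.totalDegree ≤ 2 * r → (∀ j, ((g j) ^ 2).totalDegree ≤ 2 * r) →
      fstar ≤ supQdual n m g f ε r ∧
      supQdual n m g f ε r ≤ infQ n m g f ε r ∧
      infQ n m g f ε r ≤ fstar + ε * eval xstar (theta n r) ∧
      fstar + ε * eval xstar (theta n r) ≤ fstar + ε * ∑ i, Real.exp ((xstar i) ^ 2) := by
  subst hfstar
  obtain ⟨r₀, hr₀⟩ := exists_forall_mem_dualValues hmin hε
  refine ⟨r₀, fun r hr hf hg ↦ ?_⟩
  have dual_mem := hr₀ r hr hf hg
  have primal_mem : eval xstar f + ε * eval xstar (theta n r) ∈ primalValues n m g f ε r :=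
    mem_primalValues_of_eval_eq_zero hxV
  refine ⟨?_, ?_, ?_, ?_⟩
  · exact le_csSup ⟨_, fun v hv ↦ le_of_mem_dualValues_of_mem_primalValues hv primal_mem⟩ dual_mem
  · exact csSup_le ⟨_, dual_mem⟩ fun v hv ↦ le_csInf ⟨_, primal_mem⟩ fun w ↦
      le_of_mem_dualValues_of_mem_primalValues hv
  · exact csInf_le ⟨_, fun w ↦ le_of_mem_dualValues_of_mem_primalValues dual_mem⟩ primal_mem
  · gcongr
    exact eval_theta_le_sum_exp r xstar
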